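/- arXiv:2412.13954 — 5 statements merged into one kernel-verified Lean document; each statement's English description precedes it below -/
import Mathlib

section
/- The generalised capacitance matrix 𝓒 = VC has N distinct real eigenvalues 0 = λ_1 < λ_2 < … < λ_N; the eigenvalue 0 has eigenspace spanned by the all-ones vector 𝟙 = (1,…,1)ᵀ, and all other eigenvalues are strictly positive. -/
open Matrix BigOperators

/-- The capacitance matrix of a finite chain of `N` subwavelength resonators with
(0-indexed) spacings `s 0, …, s (N-2)`. -/
noncomputable def capMatrix (N : ℕ) (s : ℕ → ℝ) : Matrix (Fin N) (Fin N) ℝ :=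
  Matrix.of fun i j =>
    if (i : ℕ) = (j : ℕ) then
      (if (i : ℕ) = 0 then 0 else 1 / s ((i : ℕ) - 1)) +
        (if (i : ℕ) = N - 1 then 0 else 1 / s (i : ℕ))
    else if (i : ℕ) + 1 = (j : ℕ) then -(1 / s (i : ℕ))
    else if (j : ℕ) + 1 = (i : ℕ) then -(1 / s (j : ℕ))
    else 0

/-- The generalised capacitance matrix `𝓒 = VC` with `V = diag(v_i²/ℓ_i)`. -/
noncomputable def genCapMatrix (N : ℕ) (s : ℕ → ℝ) (ℓ v : Fin N → ℝ) :
    Matrix (Fin N) (Fin N) ℝ :=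
  Matrix.diagonal (fun i => v i ^ 2 / ℓ i) * capMatrix N s

lemma cap_symm (N : ℕ) (s : ℕ → ℝ) (i j : Fin N) : capMatrix N s i j = capMatrix N s j i := by
  simp only [capMatrix, Matrix.of_apply]
  by_cases h : (i : ℕ) = j
  · rw [Fin.ext h]
  · have h' : ¬ ((j : ℕ) = i) := fun e => h e.symm
    rw [if_neg h, if_neg h']
    split_ifs <;> first | rfl | omega

lemma cap_rowsum (N : ℕ) (s : ℕ → ℝ) (k : Fin N) : ∑ j, capMatrix N s k j = 0 := by
  obtain ⟨k, hk⟩ := k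
  simp only [capMatrix, Matrix.of_apply]
  rw [Fin.sum_univ_eq_sum_range (fun j => if k = j then
      (if k = 0 then 0 else 1 / s (k - 1)) + (if k = N - 1 then 0 else 1 / s k)
    else if k + 1 = j then -(1 / s k)
    else if j + 1 = k then -(1 / s j)
    else 0) N]
  have key : ∀ j ∈ Finset.range N, (if k = j then
      (if k = 0 then 0 else 1 / s (k - 1)) + (if k = N - 1 then 0 else 1 / s k)
    else if k + 1 = j then -(1 / s k)
    else if j + 1 = k then -(1 / s j)
    else 0) = (if j = k then
      (if k = 0 then 0 else 1 / s (k - 1)) + (if k = N - 1 then 0 else 1 / s k) else 0)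
      + (if j = k + 1 then -(1 / s k) else 0)
      + (if j = k - 1 then (if k = 0 then 0 else -(1 / s (k - 1))) else 0) := by
    intro j _
    by_cases h1 : k = j
    · subst h1
      by_cases h0 : k = 0
      · simp [h0]
      · have : ¬ (k = k - 1) := by omega
        simp [this]
    by_cases h2 : k + 1 = j
    · have e1 : ¬ (j = k) := by omega
      have e2 : ¬ (j = k - 1) := by omega
      rw [if_neg h1, if_pos h2, if_neg e1, if_pos h2.symm, if_neg e2]; ring
    by_cases h3 : j + 1 = k
    · have e1 : ¬ (j = k) := by omega
      have e2 : j = k - 1 := by omega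
      have e3 : ¬ (k = 0) := by omega
      have e4 : ¬ (j = k + 1) := by omega
      rw [if_neg h1, if_neg h2, if_pos h3, if_neg e1, if_neg e4, if_pos e2, if_neg e3, e2]; ring
    · have e1 : ¬ (j = k) := by omega
      have e4 : ¬ (j = k + 1) := by omega
      have e2 : ¬ (j = k - 1) := by omega
      rw [if_neg h1, if_neg h2, if_neg h3, if_neg e1, if_neg e4, if_neg e2]; ring
  rw [Finset.sum_congr rfl key, Finset.sum_add_distrib, Finset.sum_add_distrib,
    Finset.sum_ite_eq', Finset.sum_ite_eq', Finset.sum_ite_eq']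
  have m1 : k ∈ Finset.range N := by simpa using hk
  have m2 : k - 1 ∈ Finset.range N := by simp only [Finset.mem_range]; omega
  rw [if_pos m1, if_pos m2]
  by_cases hl : k = N - 1
  · have m3 : k + 1 ∉ Finset.range N := by simp only [Finset.mem_range]; omega
    rw [if_neg m3, if_pos hl]
    split_ifs <;> ring
  · have m3 : k + 1 ∈ Finset.range N := by simp only [Finset.mem_range]; omega
    rw [if_pos m3, if_neg hl]
    split_ifs <;> ring

lemma cap_off (N : ℕ) (s : ℕ → ℝ) (hs : ∀ i, i < N - 1 → 0 < s i) (i j : Fin N) (h : i ≠ j) :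
    capMatrix N s i j ≤ 0 := by
  have h1 : ¬ ((i : ℕ) = j) := fun e => h (Fin.ext e)
  have hi := i.2
  have hj := j.2
  simp only [capMatrix, Matrix.of_apply]
  rw [if_neg h1]
  split_ifs with h2 h3
  · have := hs i (by omega)
    have := one_div_pos.mpr this
    linarith
  · have := hs j (by omega)
    have := one_div_pos.mpr this
    linarith
  · exact le_rfl

lemma gen_apply (N : ℕ) (s : ℕ → ℝ) (ℓ v : Fin N → ℝ) (i j : Fin N) :
    genCapMatrix N s ℓ v i j = v i ^ 2 / ℓ i * capMatrix N s i j := by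
  simp [genCapMatrix, Matrix.diagonal_mul]

/-- An eigenvector whose first coordinate vanishes is zero. -/
lemma gen_rec (N : ℕ) (s : ℕ → ℝ) (hs : ∀ i, i < N - 1 → 0 < s i)
    (ℓ v : Fin N → ℝ) (hℓ : ∀ i, 0 < ℓ i) (hv : ∀ i, 0 < v i) (μ : ℝ) (w : Fin N → ℝ)
    (hw : (genCapMatrix N s ℓ v).mulVec w = μ • w) (h0 : ∀ h : 0 < N, w ⟨0, h⟩ = 0) : w = 0 := by
  have key : ∀ n (hn : n < N), w ⟨n, hn⟩ = 0 := by
    intro n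
    induction n using Nat.strong_induction_on with
    | _ n ih =>
      intro hn
      rcases n with _ | m
      · exact h0 hn
      have hm : m < N := by omega
      have e := congrFun hw ⟨m, hm⟩
      simp only [Matrix.mulVec, dotProduct, Pi.smul_apply, smul_eq_mul] at e
      rw [ih m (by omega) hm, mul_zero, Finset.sum_eq_single ⟨m + 1, hn⟩] at e
      · rcases mul_eq_zero.mp e with e | e
        · exfalso
          rw [gen_apply] at e
          have hp := hs m (by omega)
          have h1 : 0 < v ⟨m, hm⟩ ^ 2 / ℓ ⟨m, hm⟩ := div_pos (pow_pos (hv _) 2) (hℓ _)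
          have h2 : capMatrix N s ⟨m, hm⟩ ⟨m + 1, hn⟩ = -(1 / s m) := by
            simp [capMatrix]
          rw [h2] at e
          have := mul_pos h1 (one_div_pos.mpr hp)
          linarith
        · exact e
      · intro j _ hj
        by_cases hjm : (j : ℕ) < m + 1
        · rw [show w j = 0 from ih j hjm j.2, mul_zero]
        · have hj' : (j : ℕ) ≠ m + 1 := fun e => hj (Fin.ext e)
          have h2 : capMatrix N s ⟨m, hm⟩ j = 0 := by
            simp only [capMatrix, Matrix.of_apply]
            rw [if_neg (by omega), if_neg (by omega), if_neg (by omega)]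
          rw [gen_apply, h2]; ring
      · intro h; exact absurd (Finset.mem_univ _) h
  funext i
  exact key i i.2

lemma gen_nonneg (N : ℕ) (s : ℕ → ℝ) (hs : ∀ i, i < N - 1 → 0 < s i)
    (ℓ v : Fin N → ℝ) (hℓ : ∀ i, 0 < ℓ i) (hv : ∀ i, 0 < v i) (μ : ℝ) (w : Fin N → ℝ)
    (hw0 : w ≠ 0) (hw : (genCapMatrix N s ℓ v).mulVec w = μ • w) : 0 ≤ μ := by
  have he : Module.End.HasEigenvalue (Matrix.toLin' (genCapMatrix N s ℓ v)) μ := by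
    apply Module.End.hasEigenvalue_of_hasEigenvector (x := w)
    rw [Module.End.hasEigenvector_iff, Module.End.mem_eigenspace_iff]
    exact ⟨by simpa using hw, hw0⟩
  obtain ⟨k, hk⟩ := eigenvalue_mem_ball he
  have hd : ∀ i, 0 < v i ^ 2 / ℓ i := fun i => div_pos (pow_pos (hv _) 2) (hℓ _)
  have hsum : ∑ j ∈ Finset.univ.erase k, ‖genCapMatrix N s ℓ v k j‖ = genCapMatrix N s ℓ v k k := by
    have h1 : ∀ j ∈ Finset.univ.erase k, ‖genCapMatrix N s ℓ v k j‖ = - genCapMatrix N s ℓ v k j := by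
      intro j hj
      rw [Real.norm_eq_abs, abs_of_nonpos]
      rw [gen_apply]
      exact mul_nonpos_of_nonneg_of_nonpos (hd k).le
        (cap_off N s hs k j (Finset.ne_of_mem_erase hj).symm)
    rw [Finset.sum_congr rfl h1, Finset.sum_neg_distrib]
    have h2 : ∑ j, genCapMatrix N s ℓ v k j = 0 := by
      simp only [gen_apply]
      rw [← Finset.mul_sum, cap_rowsum, mul_zero]
    rw [← Finset.add_sum_erase _ _ (Finset.mem_univ k)] at h2
    linarith
  rw [hsum, Metric.mem_closedBall, Real.dist_eq] at hk
  have := abs_le.mp hk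
  linarith [this.1]

lemma gen_ones (N : ℕ) (s : ℕ → ℝ) (ℓ v : Fin N → ℝ) (c : ℝ) :
    (genCapMatrix N s ℓ v).mulVec (fun _ => c) = 0 := by
  funext k
  simp only [Matrix.mulVec, dotProduct, gen_apply, Pi.zero_apply]
  rw [← Finset.sum_mul, ← Finset.mul_sum, cap_rowsum]; ring

lemma gen_basis (N : ℕ) (s : ℕ → ℝ)
    (ℓ v : Fin N → ℝ) (hℓ : ∀ i, 0 < ℓ i) (hv : ∀ i, 0 < v i) :
    ∃ (ev : Fin N → ℝ) (b : Fin N → Fin N → ℝ), LinearIndependent ℝ b ∧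
      ∀ i, (genCapMatrix N s ℓ v).mulVec (b i) = ev i • b i := by
  have hd : ∀ i, 0 < v i ^ 2 / ℓ i := fun i => div_pos (pow_pos (hv _) 2) (hℓ _)
  let r : Fin N → ℝ := fun i => Real.sqrt (v i ^ 2 / ℓ i)
  have hr : ∀ i, 0 < r i := fun i => Real.sqrt_pos.mpr (hd i)
  have hrr : ∀ i, r i * r i = v i ^ 2 / ℓ i := fun i => Real.mul_self_sqrt (hd i).le
  let S : Matrix (Fin N) (Fin N) ℝ := Matrix.of fun i j => r i * capMatrix N s i j * r j
  have hS : S.IsHermitian := by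
    ext i j
    simp only [Matrix.conjTranspose_apply, S, Matrix.of_apply, star_trivial]
    rw [cap_symm N s j i]; ring
  let u : Fin N → Fin N → ℝ := fun i => (hS.eigenvectorBasis i).ofLp
  have hu : ∀ i, S.mulVec (u i) = hS.eigenvalues i • u i := fun i => hS.mulVec_eigenvectorBasis i
  have hli : LinearIndependent ℝ u := by
    have := hS.eigenvectorBasis.orthonormal.linearIndependent
    exact this.map' (WithLp.linearEquiv 2 ℝ (Fin N → ℝ)).toLinearMap (LinearEquiv.ker _)
  refine ⟨hS.eigenvalues, fun i k => r k * u i k, ?_, ?_⟩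
  · rw [Fintype.linearIndependent_iff] at hli ⊢
    intro g hg
    apply hli g
    funext k
    have := congrFun hg k
    simp only [Finset.sum_apply, Pi.smul_apply, smul_eq_mul, Pi.zero_apply] at this ⊢
    have h2 : r k * ∑ i, g i * u i k = 0 := by
      rw [Finset.mul_sum, ← this]
      exact Finset.sum_congr rfl fun _ _ => by ring
    exact (mul_eq_zero.mp h2).resolve_left (hr k).ne'
  · intro i
    funext k
    have := congrFun (hu i) k
    simp only [Matrix.mulVec, dotProduct, Pi.smul_apply, smul_eq_mul, S, Matrix.of_apply] at this ⊢
    rw [mul_left_comm, ← this, Finset.mul_sum]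
    refine Finset.sum_congr rfl fun j _ => ?_
    rw [gen_apply, ← hrr]; ring

/-- the generalised capacitance matrix `𝓒 = VC` has `N` distinct real
eigenvalues `0 = λ_1 < λ_2 < … < λ_N`; these exhaust all real eigenvalues, and the eigenvalue
`0` has eigenspace spanned by the all-ones vector. -/
theorem statement4 (N : ℕ) (hN : 2 ≤ N) (s : ℕ → ℝ) (hs : ∀ i, i < N - 1 → 0 < s i)
    (ℓ v : Fin N → ℝ) (hℓ : ∀ i, 0 < ℓ i) (hv : ∀ i, 0 < v i) :
    ∃ lam : Fin N → ℝ, StrictMono lam ∧ lam ⟨0, by omega⟩ = 0 ∧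
      (∀ i, ∃ w : Fin N → ℝ, w ≠ 0 ∧ (genCapMatrix N s ℓ v).mulVec w = lam i • w) ∧
      (∀ μ : ℝ, (∃ w : Fin N → ℝ, w ≠ 0 ∧ (genCapMatrix N s ℓ v).mulVec w = μ • w) →
        ∃ i, lam i = μ) ∧
      (∀ w : Fin N → ℝ, (genCapMatrix N s ℓ v).mulVec w = 0 ↔ ∃ c : ℝ, w = fun _ => c) := by
  obtain ⟨ev, b, hli, hb⟩ := gen_basis N s ℓ v hℓ hv
  have hrec : ∀ (μ : ℝ) (w : Fin N → ℝ), (genCapMatrix N s ℓ v).mulVec w = μ • w →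
      w ⟨0, by omega⟩ = 0 → w = 0 :=
    fun μ w hw h0 => gen_rec N s hs ℓ v hℓ hv μ w hw (fun _ => h0)
  have hinj : Function.Injective ev := by
    intro i j hij
    by_contra hne
    set z : Fin N := ⟨0, by omega⟩ with hz
    have h1 : b j z • b i - b i z • b j = 0 := by
      apply hrec (ev i)
      · rw [Matrix.mulVec_sub, Matrix.mulVec_smul, Matrix.mulVec_smul, hb, hb, ← hij, smul_sub,
          smul_comm, smul_comm (b i z)]
      · simp only [Pi.sub_apply, Pi.smul_apply, smul_eq_mul]; ring
    have hp := (LinearIndepOn.pair_iff b hne).mp (hli.linearIndepOn (s := {i, j})) (b j z) (-(b i z))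
      (by rw [← h1, neg_smul, sub_eq_add_neg])
    have hbi : b i = 0 := hrec (ev i) (b i) (hb i) (neg_eq_zero.mp hp.2)
    exact hli.ne_zero i hbi
  have hspan : ∀ w : Fin N → ℝ, ∃ c : Fin N → ℝ, ∑ i, c i • b i = w := by
    intro w
    have ht := hli.span_eq_top_of_card_eq_finrank' (by simp)
    have : w ∈ Submodule.span ℝ (Set.range b) := by rw [ht]; trivial
    exact (Submodule.mem_span_range_iff_exists_fun ℝ).mp this
  have hall : ∀ μ : ℝ, (∃ w : Fin N → ℝ, w ≠ 0 ∧ (genCapMatrix N s ℓ v).mulVec w = μ • w) →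
      ∃ i, ev i = μ := by
    rintro μ ⟨w, hw0, hw⟩
    by_contra! hne
    obtain ⟨c, rfl⟩ := hspan w
    apply hw0
    have h1 : ∑ i, (c i * (ev i - μ)) • b i = 0 := by
      rw [← Matrix.mulVecLin_apply, map_sum, Finset.smul_sum, ← sub_eq_zero,
        ← Finset.sum_sub_distrib] at hw
      rw [← hw]
      refine Finset.sum_congr rfl fun i _ => ?_
      rw [map_smul, Matrix.mulVecLin_apply, hb, smul_smul, smul_smul, ← sub_smul]
      congr 1; ring
    have h2 := Fintype.linearIndependent_iff.mp hli _ h1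
    refine Finset.sum_eq_zero fun i _ => ?_
    rw [(mul_eq_zero.mp (h2 i)).resolve_right (sub_ne_zero.mpr (hne i)), zero_smul]
  have hcard : (Finset.univ.image ev).card = N := by
    rw [Finset.card_image_of_injective _ hinj]; simp
  let lam := (Finset.univ.image ev).orderEmbOfFin hcard
  have hmem : ∀ i, ∃ j, ev j = lam i := fun i => by
    obtain ⟨j, _, hj⟩ := Finset.mem_image.mp
      (Finset.orderEmbOfFin_mem (Finset.univ.image ev) hcard i)
    exact ⟨j, hj⟩
  have hsurj : ∀ j, ∃ i, lam i = ev j := fun j => by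
    have : ev j ∈ Set.range lam := by
      rw [Finset.range_orderEmbOfFin]; simp
    exact this
  have hall' : ∀ μ : ℝ, (∃ w : Fin N → ℝ, w ≠ 0 ∧ (genCapMatrix N s ℓ v).mulVec w = μ • w) →
      ∃ i, lam i = μ := fun μ h => by
    obtain ⟨j, rfl⟩ := hall μ h
    exact hsurj j
  have hex : ∀ i, ∃ w : Fin N → ℝ, w ≠ 0 ∧ (genCapMatrix N s ℓ v).mulVec w = lam i • w := by
    intro i
    obtain ⟨j, hj⟩ := hmem i
    exact ⟨b j, hli.ne_zero j, by rw [← hj]; exact hb j⟩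
  refine ⟨lam, lam.strictMono, ?_, hex, hall', ?_⟩
  · apply le_antisymm
    · obtain ⟨i, hi⟩ := hall' 0 ⟨fun _ => 1, fun h => one_ne_zero (congrFun h ⟨0, by omega⟩),
        by rw [gen_ones, zero_smul]⟩
      rw [← hi]
      exact lam.monotone (Fin.mk_le_of_le_val (Nat.zero_le _))
    · obtain ⟨w, hw0, hw⟩ := hex ⟨0, by omega⟩
      exact gen_nonneg N s hs ℓ v hℓ hv _ w hw0 hw
  · intro w
    constructor
    · intro hw
      refine ⟨w ⟨0, by omega⟩, ?_⟩
      apply sub_eq_zero.mp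
      apply hrec 0
      · rw [Matrix.mulVec_sub, hw, gen_ones]; simp
      · simp
    · rintro ⟨c, rfl⟩
      exact gen_ones N s ℓ v c
end

section
/- Let 𝓒 = VC with all wave speeds equal to one and let T_tot(λ) := T_N(λ)T_{N−1}(λ)⋯T_1(λ). Then λ ∈ ℝ is an eigenvalue of 𝓒 if and only if the vector (1,1)ᵀ is an eigenvector of T_tot(λ), i.e., T_tot(λ)(1,1)ᵀ = ν(1,1)ᵀ for some ν ∈ ℝ. -/
open Matrix BigOperators

/-- The 0-indexed predecessor of `i`, with the convention `s_{-1} := s_{N-1}`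
(paper: `s_0 := s_N`). -/
def prevIdx (N i : ℕ) : ℕ := if i = 0 then N - 1 else i - 1

/-- The transfer matrix `T_i(λ)` (0-indexed). -/
noncomputable def transferM (N : ℕ) (s ℓ : ℕ → ℝ) (lam : ℝ) (i : ℕ) :
    Matrix (Fin 2) (Fin 2) ℝ :=
  !![1 + s i / s (prevIdx N i) - ℓ i * s i * lam, -(s i / s (prevIdx N i)); 1, 0]

/-- Ordered product `f (a + k - 1) * ⋯ * f (a + 1) * f a` of `k` matrices. -/
noncomputable def orderedProd (f : ℕ → Matrix (Fin 2) (Fin 2) ℝ) (a : ℕ) :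
    ℕ → Matrix (Fin 2) (Fin 2) ℝ
  | 0 => 1
  | k + 1 => f (a + k) * orderedProd f a k

lemma capMatrix_row (N : ℕ) (s W : ℕ → ℝ) (i : Fin N) :
    (capMatrix N s).mulVec (fun j : Fin N => W j) i =
      (if (i : ℕ) = 0 then 0 else (W i - W (i - 1)) / s (i - 1)) +
      (if (i : ℕ) = N - 1 then 0 else (W i - W (i + 1)) / s i) := by
  obtain ⟨i, hi⟩ := i
  have key : ∀ j ∈ Finset.range N, (if i = j then
      (if i = 0 then 0 else 1 / s (i - 1)) + (if i = N - 1 then 0 else 1 / s i)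
    else if i + 1 = j then -(1 / s i)
    else if j + 1 = i then -(1 / s j)
    else 0) * W j =
      (if i = j then ((if i = 0 then 0 else 1 / s (i - 1)) +
        (if i = N - 1 then 0 else 1 / s i)) * W i else 0)
      + (if i + 1 = j then -(1 / s i) * W (i + 1) else 0)
      + (if i - 1 = j then (if i = 0 then 0 else -(1 / s (i - 1)) * W (i - 1)) else 0) := by
    intro j _
    rcases Nat.lt_trichotomy i j with h | h | h
    · by_cases h2 : i + 1 = j
      · subst h2
        simp
      · have h3 : i ≠ j := by omega
        have h4 : j + 1 ≠ i := by omega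
        have h5 : i - 1 ≠ j := by omega
        simp [h2, h3, h4, h5]
    · subst h
      by_cases h0 : i = 0
      · simp [h0]
      · have h5 : i - 1 ≠ i := by omega
        simp [h5]
    · have h3 : i ≠ j := by omega
      have h4 : i + 1 ≠ j := by omega
      by_cases h2 : j + 1 = i
      · subst h2
        simp [h4]
      · have h5 : i - 1 ≠ j := by omega
        simp [h2, h3, h4, h5]
  simp only [Matrix.mulVec, dotProduct, capMatrix, Matrix.of_apply]
  rw [Fin.sum_univ_eq_sum_range (fun j => (if i = j then
      (if i = 0 then 0 else 1 / s (i - 1)) + (if i = N - 1 then 0 else 1 / s i)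
    else if i + 1 = j then -(1 / s i)
    else if j + 1 = i then -(1 / s j)
    else 0) * W j) N, Finset.sum_congr rfl key, Finset.sum_add_distrib, Finset.sum_add_distrib,
    Finset.sum_ite_eq, Finset.sum_ite_eq, Finset.sum_ite_eq]
  have h1 : i - 1 < N := by omega
  simp only [Finset.mem_range, hi, h1, if_true]
  by_cases h0 : i = 0 <;> by_cases hl : i = N - 1
  · have : ¬ (i + 1 < N) := by omega
    simp only [this, if_pos h0, if_pos hl, if_false]; ring
  · have : i + 1 < N := by omega
    simp only [this, if_pos h0, if_neg hl, if_true]; ring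
  · have : ¬ (i + 1 < N) := by omega
    simp only [this, if_neg h0, if_pos hl, if_false]; ring
  · have : i + 1 < N := by omega
    simp only [this, if_neg h0, if_neg hl, if_true]; ring

lemma eig_iff (N : ℕ) (s ℓ W : ℕ → ℝ) (hℓ : ∀ i, i < N → 0 < ℓ i) (lam : ℝ) :
    (Matrix.diagonal (fun i : Fin N => 1 / ℓ (i : ℕ)) * capMatrix N s).mulVec
        (fun j : Fin N => W j) = lam • (fun j : Fin N => W j) ↔
    ∀ i, i < N → (if i = 0 then 0 else (W i - W (i - 1)) / s (i - 1)) +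
      (if i = N - 1 then 0 else (W i - W (i + 1)) / s i) = ℓ i * lam * W i := by
  rw [← Matrix.mulVec_mulVec, funext_iff, Fin.forall_iff]
  refine forall_congr' fun i => forall_congr' fun hi => ?_
  rw [Matrix.mulVec_diagonal, capMatrix_row]
  have := (hℓ i hi).ne'
  simp only [Pi.smul_apply, smul_eq_mul]
  rw [one_div, inv_mul_eq_iff_eq_mul₀ this, mul_assoc]

/-- first component of the transferred vector -/
noncomputable def tx (N : ℕ) (s ℓ : ℕ → ℝ) (lam : ℝ) (k : ℕ) : ℝ :=
  (orderedProd (transferM N s ℓ lam) 0 k).mulVec ![1, 1] 0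

lemma tx_zero (N : ℕ) (s ℓ : ℕ → ℝ) (lam : ℝ) : tx N s ℓ lam 0 = 1 := by
  simp [tx, orderedProd]

lemma ty_succ (N : ℕ) (s ℓ : ℕ → ℝ) (lam : ℝ) (k : ℕ) :
    (orderedProd (transferM N s ℓ lam) 0 (k + 1)).mulVec ![1, 1] 1 = tx N s ℓ lam k := by
  rw [orderedProd, ← Matrix.mulVec_mulVec, tx]
  generalize (orderedProd (transferM N s ℓ lam) 0 k).mulVec ![1, 1] = v
  simp [transferM, Matrix.mulVec, dotProduct, Fin.sum_univ_two]

lemma tx_succ (N : ℕ) (s ℓ : ℕ → ℝ) (lam : ℝ) (k : ℕ) :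
    tx N s ℓ lam (k + 1) = (1 + s k / s (prevIdx N k) - ℓ k * s k * lam) * tx N s ℓ lam k
      - s k / s (prevIdx N k) * (orderedProd (transferM N s ℓ lam) 0 k).mulVec ![1, 1] 1 := by
  rw [tx, tx, orderedProd, ← Matrix.mulVec_mulVec]
  generalize (orderedProd (transferM N s ℓ lam) 0 k).mulVec ![1, 1] = v
  simp [transferM, Matrix.mulVec, dotProduct, Fin.sum_univ_two]
  ring

lemma tx_rec (N : ℕ) (s ℓ : ℕ → ℝ) (hs : ∀ i, i < N → 0 < s i) (lam : ℝ) (k : ℕ) (hk : k < N) :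
    (if k = 0 then 0 else (tx N s ℓ lam k - tx N s ℓ lam (k - 1)) / s (k - 1)) +
      (tx N s ℓ lam k - tx N s ℓ lam (k + 1)) / s k = ℓ k * lam * tx N s ℓ lam k := by
  have h1 := (hs k hk).ne'
  rw [tx_succ]
  rcases k with _ | k
  · have h2 := (hs (N - 1) (by omega)).ne'
    have : (orderedProd (transferM N s ℓ lam) 0 0).mulVec ![1, 1] 1 = 1 := by simp [orderedProd]
    rw [this, tx_zero]
    simp only [if_true, prevIdx]
    field_simp
    ring
  · have h2 := (hs k (by omega)).ne'
    rw [ty_succ]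
    simp only [prevIdx, Nat.succ_ne_zero, if_false, Nat.add_sub_cancel]
    field_simp
    ring

theorem statement8 (N : ℕ) (hN : 2 ≤ N) (s ℓ : ℕ → ℝ)
    (hs : ∀ i, i < N → 0 < s i) (hℓ : ∀ i, i < N → 0 < ℓ i) (lam : ℝ) :
    (∃ w : Fin N → ℝ, w ≠ 0 ∧
        (Matrix.diagonal (fun i : Fin N => 1 / ℓ (i : ℕ)) * capMatrix N s).mulVec w =
          lam • w) ↔
      ∃ ν : ℝ, (orderedProd (transferM N s ℓ lam) 0 N).mulVec ![1, 1] = ν • ![1, 1] := by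
  obtain ⟨n, rfl⟩ : ∃ n, N = n + 1 := ⟨N - 1, by omega⟩
  have hR := tx_rec (n + 1) s ℓ hs lam
  have hy := ty_succ (n + 1) s ℓ lam n
  have h0 := tx_zero (n + 1) s ℓ lam
  have hx : (orderedProd (transferM (n + 1) s ℓ lam) 0 (n + 1)).mulVec ![1, 1] 0 =
    tx (n + 1) s ℓ lam (n + 1) := rfl
  have hsn := (hs n (by omega)).ne'
  have hrhs : (∃ ν : ℝ, (orderedProd (transferM (n + 1) s ℓ lam) 0 (n + 1)).mulVec ![1, 1] =
      ν • ![1, 1]) ↔ tx (n + 1) s ℓ lam n = tx (n + 1) s ℓ lam (n + 1) := by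
    constructor
    · rintro ⟨ν, h⟩
      rw [← hx, ← hy, h]
      simp
    · intro h
      refine ⟨tx (n + 1) s ℓ lam n, ?_⟩
      ext i
      fin_cases i
      · simpa [h] using hx
      · simpa using hy
  rw [hrhs]
  generalize tx (n + 1) s ℓ lam = x at *
  constructor
  · rintro ⟨w, hw, he⟩
    obtain ⟨W, rfl⟩ : ∃ W : ℕ → ℝ, w = fun j : Fin (n + 1) => W j :=
      ⟨fun k => if h : k < n + 1 then w ⟨k, h⟩ else 0, by ext j; simp only [j.2, dif_pos]⟩
    rw [eig_iff _ _ _ _ hℓ] at he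
    have hp : ∀ k, k < n + 1 → W k = W 0 * x k := by
      intro k
      induction k using Nat.strong_induction_on with
      | _ k ih =>
      intro hk
      rcases k with _ | k
      · simp [h0]
      · have e := he k (by omega)
        have r := hR k (by omega)
        have hsk := (hs k (by omega)).ne'
        have i1 := ih k (by omega) (by omega)
        have i2 := ih (k - 1) (by omega) (by omega)
        rw [if_neg (by omega : ¬ k = n + 1 - 1), i1, i2] at e
        have : (W 0 * x k - W (k + 1)) / s k = W 0 * ((x k - x (k + 1)) / s k) := by
          split_ifs at e r <;> linear_combination e - W 0 * r
        field_simp at this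
        linarith
    have hW0 : W 0 ≠ 0 := by
      intro h
      apply hw
      ext j
      simp [hp j j.2, h]
    have e := he n (by omega)
    have r := hR n (by omega)
    rw [if_pos (by omega : n = n + 1 - 1), hp n (by omega), hp (n - 1) (by omega)] at e
    have : W 0 * ((x n - x (n + 1)) / s n) = 0 := by
      split_ifs at e r <;> linear_combination W 0 * r - e
    simp [hW0, hsn, sub_eq_zero] at this
    exact this
  · intro h
    refine ⟨fun j => x j, ?_, ?_⟩
    · intro hz
      have := congrFun hz 0
      simp [h0] at this
    · rw [eig_iff _ _ _ _ hℓ]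
      intro i hi
      rw [← hR i hi]
      congr 1
      split_ifs with hc
      · have : i = n := by omega
        subst this
        simp [h]
      · rfl
end

section
/- For any indices 1 ≤ a ≤ b ≤ N and λ ∈ ℝ, the ordered product of transfer matrices equals the conjugated ordered product of propagation matrices: T_b(λ)T_{b−1}(λ)⋯T_a(λ) = S_{s_b}^{-1} (P_{ℓ_b,s_b}(λ)P_{ℓ_{b−1},s_{b−1}}(λ)⋯P_{ℓ_a,s_a}(λ)) S_{s_{a−1}}. -/
open Matrix BigOperators

/-- The subwavelength propagation matrix `P_{ℓ,s}(λ)`. -/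
noncomputable def propM (l sp lam : ℝ) : Matrix (Fin 2) (Fin 2) ℝ :=
  !![1 - sp * l * lam, sp; -(l * lam), 1]

/-- The change-of-basis matrix `S_s`. -/
noncomputable def cobM (sp : ℝ) : Matrix (Fin 2) (Fin 2) ℝ :=
  !![1, 0; 1 / sp, -(1 / sp)]

theorem cob_step (N : ℕ) (s ℓ : ℕ → ℝ) (lam : ℝ) (i : ℕ) (h : s i ≠ 0) :
    cobM (s i) * transferM N s ℓ lam i =
      propM (ℓ i) (s i) lam * cobM (s (prevIdx N i)) := by
  unfold cobM transferM propM
  ext p q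
  fin_cases p <;> fin_cases q <;> simp [Matrix.mul_apply, Fin.sum_univ_two] <;>
    field_simp <;> ring

theorem cob_prod (N : ℕ) (s ℓ : ℕ → ℝ) (lam : ℝ) (a k : ℕ)
    (h : ∀ i, i ≤ a + k → s i ≠ 0) :
    cobM (s (a + k)) * orderedProd (transferM N s ℓ lam) a (k + 1) =
      orderedProd (fun i => propM (ℓ i) (s i) lam) a (k + 1) *
        cobM (s (prevIdx N a)) := by
  induction k with
  | zero =>
    simpa [orderedProd] using cob_step N s ℓ lam a (h a (by omega))
  | succ k ih =>
    have ih' := ih (fun i hi => h i (by omega))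
    have hp : prevIdx N (a + (k + 1)) = a + k := by
      simp [prevIdx]
    have h1 := cob_step N s ℓ lam (a + (k + 1)) (h _ le_rfl)
    rw [hp] at h1
    rw [orderedProd, ← Matrix.mul_assoc, h1, Matrix.mul_assoc, ih', ← Matrix.mul_assoc]
    rfl

/-- for all (0-indexed) `0 ≤ a ≤ b ≤ N - 1`,
`T_b(λ)⋯T_a(λ) = S_{s_b}⁻¹ (P_{ℓ_b,s_b}(λ)⋯P_{ℓ_a,s_a}(λ)) S_{s_{a-1}}`. -/
theorem statement10 (N : ℕ) (hN : 2 ≤ N) (s ℓ : ℕ → ℝ)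
    (hs : ∀ i, i < N → 0 < s i) (hℓ : ∀ i, i < N → 0 < ℓ i) (lam : ℝ)
    (a b : ℕ) (hab : a ≤ b) (hb : b ≤ N - 1) :
    orderedProd (transferM N s ℓ lam) a (b - a + 1) =
      (cobM (s b))⁻¹ *
        orderedProd (fun i => propM (ℓ i) (s i) lam) a (b - a + 1) *
        cobM (s (prevIdx N a)) := by
  obtain ⟨k, rfl⟩ := Nat.exists_eq_add_of_le hab
  have hk : a + k - a = k := by omega
  have hne : ∀ i, i ≤ a + k → s i ≠ 0 := fun i hi => (hs i (by omega)).ne'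
  have hdet : IsUnit (cobM (s (a + k))).det := by
    have := hne (a + k) le_rfl
    simp [cobM, Matrix.det_fin_two, this]
  rw [hk, Matrix.mul_assoc, ← cob_prod N s ℓ lam a k hne, ← Matrix.mul_assoc,
    Matrix.nonsing_inv_mul _ hdet, Matrix.one_mul]
end

section
/- Let 𝓒^α = VC^α with all wave speeds equal to one and define the total propagation matrix P_tot(λ) := P_{ℓ_N,s_N}(λ)P_{ℓ_{N−1},s_{N−1}}(λ)⋯P_{ℓ_1,s_1}(λ). Then λ ∈ ℝ is an eigenvalue of 𝓒^α if and only if e^{iαL} is an eigenvalue of P_tot(λ) (as a complex matrix). -/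
open Matrix BigOperators

/-- The quasiperiodic capacitance matrix (0-indexed spacings `s 0, …, s (N-1)`, with `s (N-1)`
playing the role of `s_N = s_0`), unit-cell length `L` and quasimomentum `α`. -/
noncomputable def qpCapMatrix (N : ℕ) (s : ℕ → ℝ) (L α : ℝ) : Matrix (Fin N) (Fin N) ℂ :=
  Matrix.of fun i j =>
    (if (i : ℕ) = (j : ℕ) then
        ((1 / s (if (i : ℕ) = 0 then N - 1 else (i : ℕ) - 1) + 1 / s (i : ℕ) : ℝ) : ℂ)
      else 0) +
    (if (i : ℕ) + 1 = (j : ℕ) then ((-(1 / s (i : ℕ)) : ℝ) : ℂ) else 0) +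
    (if (j : ℕ) + 1 = (i : ℕ) then ((-(1 / s (j : ℕ)) : ℝ) : ℂ) else 0) +
    (if (i : ℕ) = 0 ∧ (j : ℕ) = N - 1 then
        -Complex.exp (-(Complex.I * α * L)) / (s (N - 1) : ℂ) else 0) +
    (if (j : ℕ) = 0 ∧ (i : ℕ) = N - 1 then
        -Complex.exp (Complex.I * α * L) / (s (N - 1) : ℂ) else 0)

theorem qp_row (N : ℕ) (hN : 2 ≤ N) (s : ℕ → ℝ) (L α : ℝ) (W : ℕ → ℂ) (z : ℂ)
    (hz : z = Complex.exp (Complex.I * α * L)) (hW : W N = z * W 0) (i : Fin N) :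
    (qpCapMatrix N s L α).mulVec (fun j : Fin N => W j) i =
      (if (i : ℕ) = 0 then (W 0 - z⁻¹ * W (N - 1)) / (s (N - 1) : ℂ)
        else (W i - W ((i : ℕ) - 1)) / (s ((i : ℕ) - 1) : ℂ))
      - (W ((i : ℕ) + 1) - W i) / (s i : ℂ) := by
  obtain ⟨i, hi⟩ := i
  have hz' : Complex.exp (-(Complex.I * α * L)) = z⁻¹ := by rw [hz, Complex.exp_neg]
  simp only [Matrix.mulVec, dotProduct, qpCapMatrix, Matrix.of_apply, hz', ← hz]
  rw [Fin.sum_univ_eq_sum_range (fun j : ℕ => ((if i = j then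
        ((1 / s (if i = 0 then N - 1 else i - 1) + 1 / s i : ℝ) : ℂ)
      else 0) +
    (if i + 1 = j then ((-(1 / s i) : ℝ) : ℂ) else 0) +
    (if j + 1 = i then ((-(1 / s j) : ℝ) : ℂ) else 0) +
    (if i = 0 ∧ j = N - 1 then -z⁻¹ / (s (N - 1) : ℂ) else 0) +
    (if j = 0 ∧ i = N - 1 then -z / (s (N - 1) : ℂ) else 0)) * W j) N]
  simp only [add_mul, Finset.sum_add_distrib, ite_mul, zero_mul, Finset.sum_ite_eq]
  have h1 : i ∈ Finset.range N := Finset.mem_range.2 hi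
  have e3 : (∑ j ∈ Finset.range N, if j + 1 = i then ((-(1 / s j) : ℝ) : ℂ) * W j else 0)
      = if i = 0 then 0 else ((-(1 / s (i - 1)) : ℝ) : ℂ) * W (i - 1) := by
    split_ifs with h
    · apply Finset.sum_eq_zero
      intro j _
      rw [if_neg (by omega)]
    · rw [Finset.sum_eq_single (i - 1)]
      · rw [if_pos (by omega)]
      · intro j _ hj
        rw [if_neg (by omega)]
      · intro h'
        exact absurd (Finset.mem_range.2 (by omega)) h'
  have e4 : (∑ j ∈ Finset.range N,
        if i = 0 ∧ j = N - 1 then -z⁻¹ / (s (N - 1) : ℂ) * W j else 0)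
      = if i = 0 then -z⁻¹ / (s (N - 1) : ℂ) * W (N - 1) else 0 := by
    rw [Finset.sum_eq_single (N - 1)]
    · simp
    · intro j _ hj
      rw [if_neg (by omega)]
    · intro h'
      exact absurd (Finset.mem_range.2 (by omega)) h'
  have e5 : (∑ j ∈ Finset.range N,
        if j = 0 ∧ i = N - 1 then -z / (s (N - 1) : ℂ) * W j else 0)
      = if i = N - 1 then -z / (s (N - 1) : ℂ) * W 0 else 0 := by
    rw [Finset.sum_eq_single 0]
    · simp
    · intro j _ hj
      rw [if_neg (by omega)]
    · intro h'
      exact absurd (Finset.mem_range.2 (by omega)) h'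
  rw [e3, e4, e5, if_pos h1]
  by_cases h0 : i = 0
  · subst h0
    have a1 : ¬ (0 = N - 1) := by omega
    have a2 : 0 + 1 ∈ Finset.range N := Finset.mem_range.2 (by omega)
    simp only [if_true, if_neg a1, if_pos a2]
    push_cast
    ring
  · by_cases hl : i = N - 1
    · have a2 : i + 1 ∉ Finset.range N := by simp; omega
      have a3 : i + 1 = N := by omega
      simp only [if_neg h0, if_pos hl, if_neg a2]
      rw [a3, hW, ← hl]
      push_cast
      ring
    · have a2 : i + 1 ∈ Finset.range N := Finset.mem_range.2 (by omega)
      simp only [if_neg h0, if_neg hl, if_pos a2]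
      push_cast
      ring

theorem prod_step (s ℓ : ℕ → ℝ) (lam : ℝ) (w : Fin 2 → ℂ) (k : ℕ) :
    ((orderedProd (fun i => propM (ℓ i) (s i) lam) 0 (k + 1)).map Complex.ofReal).mulVec w
     = ((propM (ℓ k) (s k) lam).map Complex.ofReal).mulVec
      (((orderedProd (fun i => propM (ℓ i) (s i) lam) 0 k).map Complex.ofReal).mulVec w) := by
  rw [Matrix.mulVec_mulVec]
  congr 1
  rw [orderedProd, Nat.zero_add]
  exact Matrix.map_mul (f := Complex.ofRealHom)

theorem propM_zero (l sp lam : ℝ) (v : Fin 2 → ℂ) :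
    ((propM l sp lam).map Complex.ofReal).mulVec v 0 = v 0 + sp * (v 1 - l * lam * v 0) := by
  simp [propM, Matrix.mulVec, dotProduct, Fin.sum_univ_two]
  ring

theorem propM_one (l sp lam : ℝ) (v : Fin 2 → ℂ) :
    ((propM l sp lam).map Complex.ofReal).mulVec v 1 = v 1 - l * lam * v 0 := by
  simp [propM, Matrix.mulVec, dotProduct, Fin.sum_univ_two]
  ring

/-- with `P_tot(λ) = P_{ℓ_N,s_N}(λ)⋯P_{ℓ_1,s_1}(λ)` and unit wave speeds,
a real `λ` is an eigenvalue of `𝓒^α = VC^α` if and only if `e^{iαL}` is an eigenvalue of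
`P_tot(λ)` regarded as a complex matrix. -/
theorem statement13 (N : ℕ) (hN : 2 ≤ N) (s ℓ : ℕ → ℝ)
    (hs : ∀ i, i < N → 0 < s i) (hℓ : ∀ i, i < N → 0 < ℓ i)
    (L : ℝ) (hL : 0 < L) (α : ℝ) (lam : ℝ) :
    (∃ w : Fin N → ℂ, w ≠ 0 ∧
        ((Matrix.diagonal fun i : Fin N => ((1 / ℓ (i : ℕ) : ℝ) : ℂ)) *
            qpCapMatrix N s L α).mulVec w = (lam : ℂ) • w) ↔
      ∃ w : Fin 2 → ℂ, w ≠ 0 ∧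
        ((orderedProd (fun i => propM (ℓ i) (s i) lam) 0 N).map Complex.ofReal).mulVec w =
          Complex.exp (Complex.I * α * L) • w := by
  obtain ⟨z, hz⟩ : ∃ z, z = Complex.exp (Complex.I * α * L) := ⟨_, rfl⟩
  have hz0 : z ≠ 0 := by rw [hz]; exact Complex.exp_ne_zero _
  have hsC : ∀ i, i < N → (s i : ℂ) ≠ 0 := fun i hi =>
    Complex.ofReal_ne_zero.2 (hs i hi).ne'
  have hlC : ∀ i, i < N → (ℓ i : ℂ) ≠ 0 := fun i hi =>
    Complex.ofReal_ne_zero.2 (hℓ i hi).ne'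
  rw [← hz]
  constructor
  · rintro ⟨w, hw, he⟩
    obtain ⟨W, hWdef⟩ : ∃ W : ℕ → ℂ, W = fun k => if h : k < N then w ⟨k, h⟩
      else z * w ⟨0, by omega⟩ := ⟨_, rfl⟩
    have hWw : (fun j : Fin N => W j) = w := by
      funext j
      simp [hWdef]
    have hWN : W N = z * W 0 := by
      simp [hWdef, show 0 < N by omega]
    obtain ⟨D, hD⟩ : ∃ D : ℕ → ℂ, D = fun k =>
      if k = 0 then (W 0 - z⁻¹ * W (N - 1)) / (s (N - 1) : ℂ)
        else (W k - W (k - 1)) / (s (k - 1) : ℂ) := ⟨_, rfl⟩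
    have hDs : ∀ k, D (k + 1) = (W (k + 1) - W k) / (s k : ℂ) := by
      intro k; simp [hD]
    have hrow : ∀ k, k < N → D (k + 1) = D k - ℓ k * lam * W k := by
      intro k hk
      have h1 := congrFun he ⟨k, hk⟩
      rw [← Matrix.mulVec_mulVec, Matrix.mulVec_diagonal, ← hWw,
        qp_row N hN s L α W z hz hWN] at h1
      simp only [Pi.smul_apply, smul_eq_mul] at h1
      rw [← hDs] at h1
      have h2 : ((1 / ℓ k : ℝ) : ℂ) * (D k - D (k + 1)) = lam * W k := by
        rw [← h1, hD]
      have := hlC k hk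
      push_cast at h2
      field_simp at h2
      linear_combination -h2
    have hx : ∀ k, k ≤ N → ((orderedProd (fun i => propM (ℓ i) (s i) lam) 0 k).map
        Complex.ofReal).mulVec ![W 0, D 0] = ![W k, D k] := by
      intro k
      induction k with
      | zero =>
        intro _
        rw [orderedProd, Matrix.map_one _ Complex.ofReal_zero Complex.ofReal_one,
          Matrix.one_mulVec]
      | succ k ih =>
        intro hk
        rw [prod_step, ih (by omega)]
        have hr := hrow k (by omega)
        have hd := hDs k
        have := hsC k (by omega)
        funext j
        fin_cases j
        · simp only [Fin.zero_eta, propM_zero]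
          simp only [Matrix.cons_val_zero, Matrix.cons_val_one]
          rw [← hr, hd]
          field_simp
          ring
        · simp only [Fin.mk_one, propM_one]
          simp only [Matrix.cons_val_zero, Matrix.cons_val_one]
          rw [← hr]
    refine ⟨![W 0, D 0], ?_, ?_⟩
    · intro h0
      apply hw
      rw [← hWw]
      funext j
      have := hx j j.2.le
      rw [h0, Matrix.mulVec_zero] at this
      simpa using (congrFun this 0).symm
    · rw [hx N le_rfl]
      have hDN : D N = z * D 0 := by
        have h1 := hDs (N - 1)
        rw [Nat.sub_add_cancel (by omega), hWN] at h1
        have := hsC (N - 1) (by omega)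
        rw [h1, hD]
        simp only [if_true]
        field_simp
      rw [hWN, hDN]
      simp
  · rintro ⟨x, hx, he⟩
    obtain ⟨X, hX⟩ : ∃ X : ℕ → Fin 2 → ℂ, X = fun k =>
      ((orderedProd (fun i => propM (ℓ i) (s i) lam) 0 k).map Complex.ofReal).mulVec x :=
      ⟨_, rfl⟩
    have hX0 : X 0 = x := by
      simp only [hX]
      rw [orderedProd, Matrix.map_one _ Complex.ofReal_zero Complex.ofReal_one,
          Matrix.one_mulVec]
    have hXN : X N = z • X 0 := by rw [hX0, ← he, hX]
    have hstep : ∀ k, X (k + 1) = ((propM (ℓ k) (s k) lam).map Complex.ofReal).mulVec (X k) := by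
      intro k
      simp only [hX]
      exact prod_step s ℓ lam x k
    have hd : ∀ k, X (k + 1) 1 = X k 1 - ℓ k * lam * X k 0 := by
      intro k; rw [hstep, propM_one]
    have hu : ∀ k, X (k + 1) 0 = X k 0 + s k * X (k + 1) 1 := by
      intro k; rw [hd, hstep, propM_zero]
    have hu' : ∀ k, k < N → (X (k + 1) 0 - X k 0) / (s k : ℂ) = X (k + 1) 1 := by
      intro k hk
      have := hsC k hk
      rw [hu k]
      field_simp
      ring
    have hWN : X N 0 = z * X 0 0 := by rw [hXN]; simp
    have hDN : X N 1 = z * X 0 1 := by rw [hXN]; simp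
    refine ⟨fun j => X j 0, ?_, ?_⟩
    · intro h0
      apply hx
      have a0 : X 0 0 = 0 := congrFun h0 ⟨0, by omega⟩
      have a1 : X 1 0 = 0 := congrFun h0 ⟨1, by omega⟩
      have b1 : X 1 1 = 0 := by
        rw [← hu' 0 (by omega)]
        simp [a0, a1]
      have b0 : X 0 1 = 0 := by
        have := hd 0
        simp only [zero_add] at this
        rw [b1, a0] at this
        linear_combination -this
      rw [← hX0]
      funext j
      fin_cases j
      · exact a0
      · exact b0
    · funext i
      rw [← Matrix.mulVec_mulVec, Matrix.mulVec_diagonal,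
        qp_row N hN s L α (fun k => X k 0) z hz hWN]
      obtain ⟨i, hi⟩ := i
      simp only [Pi.smul_apply, smul_eq_mul]
      rw [hu' i hi]
      have hp : (if i = 0 then (X 0 0 - z⁻¹ * X (N - 1) 0) / (s (N - 1) : ℂ)
        else (X i 0 - X (i - 1) 0) / (s (i - 1) : ℂ)) = X i 1 := by
        split_ifs with h
        · subst h
          have h1 := hu' (N - 1) (by omega)
          rw [Nat.sub_add_cancel (by omega), hWN, hDN] at h1
          have := hsC (N - 1) (by omega)
          field_simp at h1 ⊢
          linear_combination h1
        · have h1 := hu' (i - 1) (by omega)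
          rwa [Nat.sub_add_cancel (by omega)] at h1
      rw [hp, hd]
      have := hlC i hi
      push_cast
      field_simp
      ring
end

section
/- Let 𝓒^α = VC^α with all wave speeds equal to one and P_tot(λ) := P_{ℓ_N,s_N}(λ)⋯P_{ℓ_1,s_1}(λ). If λ ∈ ℝ satisfies |tr P_tot(λ)| > 2, then λ is not an eigenvalue of 𝓒^α for any quasimomentum α ∈ ℝ; that is, λ lies in a bandgap of the periodised system. -/
open Matrix BigOperators

lemma aux_prop (f : ℕ → Matrix (Fin 2) (Fin 2) ℝ) (N : ℕ) (a d : ℕ → ℂ)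
    (h0 : ∀ i < N, a (i + 1) = (f i 0 0 : ℂ) * a i + (f i 0 1 : ℂ) * d i)
    (h1 : ∀ i < N, d (i + 1) = (f i 1 0 : ℂ) * a i + (f i 1 1 : ℂ) * d i) :
    ∀ k ≤ N, a k = (orderedProd f 0 k 0 0 : ℂ) * a 0 + (orderedProd f 0 k 0 1 : ℂ) * d 0 ∧
      d k = (orderedProd f 0 k 1 0 : ℂ) * a 0 + (orderedProd f 0 k 1 1 : ℂ) * d 0 := by
  intro k
  induction k with
  | zero => intro _; simp [orderedProd]
  | succ k ih =>
    intro hk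
    obtain ⟨e0, e1⟩ := ih (by omega)
    rw [h0 k hk, h1 k hk, e0, e1]
    simp only [orderedProd, Matrix.mul_apply, Fin.sum_univ_two, zero_add]
    push_cast
    constructor <;> ring

lemma aux_det (l s : ℕ → ℝ) (lam : ℝ) (k : ℕ) :
    (orderedProd (fun i => propM (l i) (s i) lam) 0 k).det = 1 := by
  induction k with
  | zero => simp [orderedProd]
  | succ k ih =>
    rw [orderedProd, Matrix.det_mul, ih]
    simp [propM, Matrix.det_fin_two]
    ring

lemma aux_trace (A : Matrix (Fin 2) (Fin 2) ℝ) (hdet : A.det = 1) (x y z : ℂ) (hz : ‖z‖ = 1)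
    (hxy : x ≠ 0 ∨ y ≠ 0)
    (h0 : z * x = (A 0 0 : ℂ) * x + (A 0 1 : ℂ) * y)
    (h1 : z * y = (A 1 0 : ℂ) * x + (A 1 1 : ℂ) * y) : |A.trace| ≤ 2 := by
  rw [Matrix.det_fin_two] at hdet
  have hd : (A 0 0 : ℂ) * A 1 1 - A 0 1 * A 1 0 = 1 := by exact_mod_cast hdet
  have hq : z * z - (A 0 0 + A 1 1 : ℂ) * z + 1 = 0 := by
    rcases hxy with h | h
    · apply (mul_eq_zero.mp _).resolve_right h
      linear_combination (z - A 1 1) * h0 + (A 0 1 : ℂ) * h1 - x * hd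
    · apply (mul_eq_zero.mp _).resolve_right h
      linear_combination (z - A 0 0) * h1 + (A 1 0 : ℂ) * h0 - y * hd
  have e : (A.trace : ℂ) * z = z * z + 1 := by
    rw [Matrix.trace_fin_two]; push_cast; linear_combination -hq
  have e2 : ‖(A.trace : ℂ) * z‖ ≤ 2 := by
    rw [e]
    refine (norm_add_le _ _).trans ?_
    rw [norm_mul, hz, norm_one]; norm_num
  rw [norm_mul, hz, mul_one, Complex.norm_real, Real.norm_eq_abs] at e2
  exact e2

lemma aux_row (N : ℕ) (s : ℕ → ℝ) (L α : ℝ) (w : Fin N → ℂ) (W : ℕ → ℂ)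
    (hW : ∀ j : Fin N, W j = w j) (i : Fin N) :
    (qpCapMatrix N s L α).mulVec w i =
      (1 / s (if (i : ℕ) = 0 then N - 1 else (i : ℕ) - 1) + 1 / s i : ℂ) * W i
      + (if (i : ℕ) + 1 < N then -(1 / s i : ℂ) * W (i + 1) else 0)
      + (if (i : ℕ) = 0 then 0 else -(1 / s ((i : ℕ) - 1) : ℂ) * W (i - 1))
      + (if (i : ℕ) = 0 then
          -Complex.exp (-(Complex.I * α * L)) / (s (N - 1) : ℂ) * W (N - 1) else 0)
      + (if (i : ℕ) = N - 1 then
          -Complex.exp (Complex.I * α * L) / (s (N - 1) : ℂ) * W 0 else 0) := by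
  have hi := i.2
  simp only [Matrix.mulVec, dotProduct, qpCapMatrix, Matrix.of_apply, ← hW]
  rw [Fin.sum_univ_eq_sum_range (fun j : ℕ => ((if (i : ℕ) = j then
        ((1 / s (if (i : ℕ) = 0 then N - 1 else (i : ℕ) - 1) + 1 / s (i : ℕ) : ℝ) : ℂ)
      else 0) +
    (if (i : ℕ) + 1 = j then ((-(1 / s (i : ℕ)) : ℝ) : ℂ) else 0) +
    (if j + 1 = (i : ℕ) then ((-(1 / s j) : ℝ) : ℂ) else 0) +
    (if (i : ℕ) = 0 ∧ j = N - 1 then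
        -Complex.exp (-(Complex.I * α * L)) / (s (N - 1) : ℂ) else 0) +
    (if j = 0 ∧ (i : ℕ) = N - 1 then
        -Complex.exp (Complex.I * α * L) / (s (N - 1) : ℂ) else 0)) * W j) N]
  simp only [add_mul, Finset.sum_add_distrib, ite_mul, zero_mul]
  congr 1
  · congr 1
    · congr 1
      · congr 1
        · rw [Finset.sum_ite_eq]; simp [hi, add_mul]
        · rw [Finset.sum_ite_eq]; simp
      · rcases Nat.eq_zero_or_pos (i : ℕ) with h | h
        · simp [h]
        · rw [if_neg (by omega), Finset.sum_eq_single ((i : ℕ) - 1)]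
          · rw [if_pos (by omega)]; simp
          · intro b _ hb; rw [if_neg (by omega)]
          · intro hb; simp at hb; omega
    · rw [Finset.sum_eq_single (N - 1)]
      · simp
      · intro b _ hb; rw [if_neg (by tauto)]
      · intro hb; simp at hb; omega
  · rw [Finset.sum_eq_single 0]
    · simp
    · intro b _ hb; rw [if_neg (by tauto)]
    · intro hb; simp at hb; omega

/-- if `|tr P_tot(λ)| > 2` then `λ` is not an eigenvalue of `𝓒^α = VC^α`
(unit wave speeds) for any quasimomentum `α ∈ ℝ`: `λ` lies in a bandgap of the periodised
system. -/
theorem statement14 (N : ℕ) (hN : 2 ≤ N) (s ℓ : ℕ → ℝ)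
    (hs : ∀ i, i < N → 0 < s i) (hℓ : ∀ i, i < N → 0 < ℓ i)
    (L : ℝ) (hL : 0 < L) (lam : ℝ)
    (htr : 2 < |(orderedProd (fun i => propM (ℓ i) (s i) lam) 0 N).trace|) :
    ∀ α : ℝ, ¬∃ w : Fin N → ℂ, w ≠ 0 ∧
        ((Matrix.diagonal fun i : Fin N => ((1 / ℓ (i : ℕ) : ℝ) : ℂ)) *
            qpCapMatrix N s L α).mulVec w = (lam : ℂ) • w := by
  rintro α ⟨w, hw, hew⟩
  set z := Complex.exp (Complex.I * α * L) with hz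
  have hzn : ‖z‖ = 1 := by
    rw [hz, show Complex.I * α * L = ((α * L : ℝ) : ℂ) * Complex.I by push_cast; ring]
    exact Complex.norm_exp_ofReal_mul_I _
  have hz0 : z ≠ 0 := Complex.exp_ne_zero _
  have hsc : ∀ i < N, (s i : ℂ) ≠ 0 := fun i hi => by exact_mod_cast (hs i hi).ne'
  have hlc : ∀ i < N, (ℓ i : ℂ) ≠ 0 := fun i hi => by exact_mod_cast (hℓ i hi).ne'
  let W : ℕ → ℂ := fun j => if h : j < N then w ⟨j, h⟩ else z * w ⟨0, by omega⟩
  have hW : ∀ j : Fin N, W j = w j := fun j => by simp [W]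
  have hWN : W N = z * W 0 := by simp [W, show 0 < N by omega]
  let d : ℕ → ℂ := fun j => Nat.casesOn j ((W 0 - z⁻¹ * W (N - 1)) / s (N - 1))
    (fun k => (W (k + 1) - W k) / s k)
  have hd0 : d 0 = (W 0 - z⁻¹ * W (N - 1)) / s (N - 1) := rfl
  have hdS : ∀ k, d (k + 1) = (W (k + 1) - W k) / s k := fun k => rfl
  have hdN : d N = z * d 0 := by
    obtain ⟨M, rfl⟩ : ∃ M, N = M + 1 := ⟨N - 1, by omega⟩
    rw [hdS, hd0, hWN, Nat.add_sub_cancel]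
    field_simp
  have hrow : ∀ i < N, d (i + 1) = d i - lam * ℓ i * W i := by
    intro i hi
    have h := congrFun hew ⟨i, hi⟩
    rw [← Matrix.mulVec_mulVec, Matrix.mulVec_diagonal, aux_row N s L α w W hW,
      Pi.smul_apply, ← hW, smul_eq_mul, Complex.exp_neg, ← hz] at h
    simp only at h
    have hl := hlc i hi
    have h' := congrArg (fun t => (ℓ i : ℂ) * t) h
    simp only [← mul_assoc] at h'
    push_cast at h'
    rw [mul_one_div_cancel hl, one_mul] at h'
    rcases i with _ | k
    · rw [hdS, hd0]
      simp only [if_true, if_pos (show 0 + 1 < N by omega), if_neg (show ¬ 0 = N - 1 by omega)] at h'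
      simp only [zero_add] at h' ⊢
      linear_combination -h'
    · rw [hdS, hdS]
      simp only [if_neg (Nat.succ_ne_zero k), Nat.add_sub_cancel] at h'
      by_cases hk : k + 1 + 1 < N
      · rw [if_pos hk, if_neg (show ¬ k + 1 = N - 1 by omega)] at h'
        linear_combination -h'
      · have hN' : N = k + 1 + 1 := by omega
        rw [if_neg hk, if_pos (show k + 1 = N - 1 by omega)] at h'
        rw [← hN', hWN]
        rw [show N - 1 = k + 1 by omega] at h'
        linear_combination -h'
  have hstep : ∀ i < N, W (i + 1) = W i + s i * d (i + 1) := by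
    intro i hi
    have := hsc i hi
    rw [hdS]; field_simp; ring
  have key := aux_prop (fun i => propM (ℓ i) (s i) lam) N W d
    (by
      intro i hi
      rw [hstep i hi, hrow i hi]
      simp [propM]; ring)
    (by
      intro i hi
      rw [hrow i hi]
      simp [propM]; ring)
  have hne : W 0 ≠ 0 ∨ d 0 ≠ 0 := by
    rw [← not_and_or]
    intro hc
    apply hw
    funext j
    rw [← hW, (key j j.2.le).1, hc.1, hc.2]; simp
  obtain ⟨k0, k1⟩ := key N le_rfl
  rw [hWN] at k0
  rw [hdN] at k1
  exact absurd (aux_trace _ (aux_det ℓ s lam N) _ _ z hzn hne k0 k1) (not_le.mpr htr)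
end
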